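/- Let A = (λ_1, …, λ_n) be a non pyramidal regular configuration in ℤ^d of rank d, and let B be a Gale dual of A with rows b_1, …, b_n. Then the following are equivalent: (i) for every 1-dimensional linear subspace L of ℚ^{n−d}, Σ_{i : b_i ∈ L} b_i = 0; (ii) every coparallelism class of A is a parallel face complement. (These are the two combinatorial criteria, of Theorems teo:Bside and teo:Aside respectively, each characterizing self-duality of the projective toric variety X_A.) -/

import Mathlib

open scoped Classical

/-!
Gale duality: with `b i` the rows of `B`, a vector `w` lies in the row space of `A` iff
`∑ i, w i • b i = 0`. Applied to the indicator of `S`, it says that `S` is a parallel face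
complement iff the rows of `B` indexed by `S` sum to zero. On the other hand, `v ∈ ker A` means that
`v i` is the value at `b i` of one fixed linear form, so `i` and `j` are coparallel iff `b i` and
`b j` span the same subspace. Hence the coparallelism classes are the sets of nonzero rows on a
common line, together with the set of zero rows, which affects none of the sums.
-/

section LineSums

open Submodule

variable {K V κ : Type*} [Field K] [AddCommGroup V] [Module K V]

theorem span_singleton_eq_of_finrank_eq_one {L : Submodule K V} (hL : Module.finrank K L = 1)
    {x : V} (hxL : x ∈ L) (hx : x ≠ 0) : span K {x} = L :=
  have : FiniteDimensional K L := Module.finite_of_finrank_eq_succ hL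
  eq_of_le_of_finrank_eq ((span_singleton_le_iff_mem x L).2 hxL)
    (by rw [finrank_span_singleton hx, hL])

variable [Fintype κ]

theorem sum_filter_mem_eq_sum_filter_span_eq (b : κ → V) {L : Submodule K V}
    (hL : Module.finrank K L = 1) :
    ∑ j with b j ∈ L, b j = ∑ j with L = span K {b j}, b j := by
  symm
  refine Finset.sum_subset (fun j hj ↦ ?_) fun j hjL hj ↦ ?_
  · simp only [Finset.mem_filter_univ] at hj ⊢
    exact hj ▸ mem_span_singleton_self (b j)
  · simp only [Finset.mem_filter_univ] at hjL hj
    by_contra hbj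
    exact hj (span_singleton_eq_of_finrank_eq_one hL hjL hbj).symm

theorem forall_line_sum_eq_zero_iff (b : κ → V) :
    (∀ L : Submodule K V, Module.finrank K L = 1 → ∑ j with b j ∈ L, b j = 0) ↔
      ∀ i, ∑ j with span K {b i} = span K {b j}, b j = 0 := by
  constructor
  · intro h i
    by_cases hi : b i = 0
    · refine Finset.sum_eq_zero fun j hj ↦ ?_
      rwa [Finset.mem_filter_univ, hi, span_zero_singleton, eq_comm, span_singleton_eq_bot] at hj
    · have hline : Module.finrank K (span K {b i}) = 1 := finrank_span_singleton hi
      rw [← sum_filter_mem_eq_sum_filter_span_eq b hline, h _ hline]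
  · intro h L hL
    rw [sum_filter_mem_eq_sum_filter_span_eq b hL]
    by_cases hex : ∃ i, L = span K {b i}
    · obtain ⟨i, rfl⟩ := hex
      exact h i
    · exact Finset.sum_eq_zero fun j hj ↦ absurd ⟨j, (Finset.mem_filter_univ j).1 hj⟩ hex

end LineSums

section GaleDuality

open Matrix Submodule

variable {K ι κ τ : Type*} [Field K]

/-- Coparallelism of two columns of a configuration `A`, the columns of `A` being its points: every
linear relation between the points involves both of them or neither. -/
def Coparallel [Fintype κ] (A : Matrix ι κ K) (i j : κ) : Prop :=
  ∀ v : κ → K, A *ᵥ v = 0 → (v i ≠ 0 ↔ v j ≠ 0)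

/-- The columns of `A` indexed by `S` lie on an affine hyperplane `ℓ = 1` and the others on the
parallel hyperplane `ℓ = 0`. The linear form `ℓ` is encoded by its coefficients `l`, so that its
value at the `j`-th column is `(l ᵥ* A) j`. -/
def IsParallelFaceComplement [Fintype ι] (A : Matrix ι κ K) (S : Set κ) : Prop :=
  ∃ l : ι → K, (∀ j ∈ S, (l ᵥ* A) j = 1) ∧ ∀ j ∉ S, (l ᵥ* A) j = 0

theorem isParallelFaceComplement_iff_exists_vecMul_eq_indicator [Fintype ι]
    {A : Matrix ι κ K} (S : Set κ) :
    IsParallelFaceComplement A S ↔ ∃ l, l ᵥ* A = S.indicator 1 := by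
  refine exists_congr fun l ↦ ⟨fun ⟨hone, hzero⟩ ↦ ?_, fun h ↦ ?_⟩
  · ext j
    by_cases hj : j ∈ S <;> simp [hj, hone, hzero]
  · exact ⟨fun j hj ↦ by simp [h, hj], fun j hj ↦ by simp [h, hj]⟩

variable [Fintype κ]

theorem mem_span_iff_forall_dotProduct_eq_zero {s : Set (κ → K)} {w : κ → K} :
    w ∈ span K s ↔ ∀ v : κ → K, (∀ x ∈ s, x ⬝ᵥ v = 0) → w ⬝ᵥ v = 0 := by
  constructor
  · intro hw v hv
    have hle : span K s ≤ LinearMap.ker ((dotProductBilin K K).flip v) := span_le.2 hv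
    exact hle hw
  · intro h
    have hmem : dotProductEquiv K κ w ∈ span K (Set.range fun x : s ↦ dotProductEquiv K κ x) :=
      FiniteDimensional.mem_span_of_iInf_ker_le_ker fun v hv ↦ h v (by simpa using hv)
    rw [Set.range_comp' (dotProductEquiv K κ) Subtype.val, Subtype.range_coe] at hmem
    rwa [← LinearEquiv.coe_coe, span_image, LinearEquiv.coe_coe, mem_map_equiv,
      LinearEquiv.symm_apply_apply] at hmem

theorem span_singleton_eq_iff_forall_dotProduct {x y : κ → K} :
    span K {x} = span K {y} ↔ ∀ c, x ⬝ᵥ c = 0 ↔ y ⬝ᵥ c = 0 := by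
  simp only [le_antisymm_iff, span_singleton_le_iff_mem, mem_span_iff_forall_dotProduct_eq_zero,
    Set.mem_singleton_iff, forall_eq, ← forall_and]
  exact forall_congr' fun c ↦ and_comm.trans iff_iff_implies_and_implies.symm

variable [Fintype τ] {A : Matrix ι κ K} {B : Matrix κ τ K}

theorem coparallel_iff_span_row_eq (hAB : Function.Exact B.mulVec A.mulVec) (i j : κ) :
    Coparallel A i j ↔ span K {B.row i} = span K {B.row j} := by
  rw [span_singleton_eq_iff_forall_dotProduct]
  constructor
  · exact fun h c ↦ not_iff_not.1 (h _ (hAB.apply_apply_eq_zero c))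
  · intro h v hv
    obtain ⟨c, rfl⟩ := (hAB v).1 hv
    exact not_congr (h c)

variable [Fintype ι]

theorem exists_vecMul_eq_iff_vecMul_eq_zero (hAB : Function.Exact B.mulVec A.mulVec) (w : κ → K) :
    (∃ l, l ᵥ* A = w) ↔ w ᵥ* B = 0 :=
  calc (∃ l, l ᵥ* A = w)
    _ ↔ w ∈ span K (Set.range A.row) := by rw [← range_vecMulLinear]; rfl
    _ ↔ ∀ v, A *ᵥ v = 0 → w ⬝ᵥ v = 0 := by
      simp only [mem_span_iff_forall_dotProduct_eq_zero, Set.forall_mem_range, funext_iff]; rfl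
    _ ↔ ∀ c, w ⬝ᵥ B *ᵥ c = 0 := by simp only [hAB _, Set.forall_mem_range]
    _ ↔ w ᵥ* B = 0 := by simp only [dotProduct_mulVec, dotProduct_eq_zero_iff]

theorem isParallelFaceComplement_iff_sum_row_eq_zero (hAB : Function.Exact B.mulVec A.mulVec)
    (S : Set κ) : IsParallelFaceComplement A S ↔ ∑ j with j ∈ S, B.row j = 0 := by
  rw [isParallelFaceComplement_iff_exists_vecMul_eq_indicator,
    exists_vecMul_eq_iff_vecMul_eq_zero hAB, vecMul_eq_sum, Finset.sum_filter]
  simp [Set.indicator_apply, Matrix.row]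

theorem forall_line_sum_row_eq_zero_iff_isParallelFaceComplement
    (hAB : Function.Exact B.mulVec A.mulVec) :
    (∀ L : Submodule K (τ → K), Module.finrank K L = 1 →
        ∑ i with B.row i ∈ L, B.row i = 0) ↔
      ∀ i, IsParallelFaceComplement A {j | Coparallel A i j} := by
  simp only [forall_line_sum_eq_zero_iff, isParallelFaceComplement_iff_sum_row_eq_zero hAB,
    coparallel_iff_span_row_eq hAB, Set.mem_ofPred_eq]

end GaleDuality

section FractionField

open Matrix

theorem map_mulVec_comp {R S m n : Type*} [NonAssocSemiring R] [NonAssocSemiring S] [Fintype n]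
    (f : R →+* S) (M : Matrix m n R) (u : n → R) : M.map f *ᵥ (f ∘ u) = f ∘ (M *ᵥ u) :=
  funext fun r ↦ (f.map_mulVec M u r).symm

variable {R ι κ τ : Type*} (K : Type*) [CommRing R] [Field K] [Algebra R K] [IsFractionRing R K]
  [Fintype κ] [Fintype τ]

theorem exact_mulVec_map_algebraMap {A : Matrix ι κ R} {B : Matrix κ τ R}
    (hAB : Function.Exact B.mulVec A.mulVec) :
    Function.Exact (B.map (algebraMap R K)).mulVec (A.map (algebraMap R K)).mulVec := by
  intro v
  constructor
  · intro hv
    obtain ⟨s, hs⟩ := IsLocalization.exist_integer_multiples_of_finite (nonZeroDivisors R) v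
    choose u hu using hs
    have hs0 : algebraMap R K s ≠ 0 := (IsLocalization.map_units K s).ne_zero
    have hu' : algebraMap R K ∘ u = algebraMap R K s • v :=
      funext fun i ↦ (hu i).trans (Algebra.smul_def _ _)
    have hAu : A *ᵥ u = 0 := by
      apply (IsFractionRing.injective R K).comp_left
      simp only [← map_mulVec_comp, hu', mulVec_smul, hv]
      ext; simp
    obtain ⟨c, rfl⟩ := (hAB u).1 hAu
    refine ⟨(algebraMap R K s)⁻¹ • (algebraMap R K ∘ c), ?_⟩
    rw [mulVec_smul, map_mulVec_comp, hu', inv_smul_smul₀ hs0]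
  · rintro ⟨c, rfl⟩
    have hzero : A * B = 0 := mulVec_injective <| funext fun c ↦ by
      rw [← mulVec_mulVec, hAB.apply_apply_eq_zero, zero_mulVec]
    rw [mulVec_mulVec, ← Matrix.map_mul, hzero, Matrix.map_zero _ (map_zero _), zero_mulVec]

theorem stmt6_general [Fintype ι] (A : Matrix ι κ R) (B : Matrix κ τ R)
    (hAB : Function.Exact B.mulVec A.mulVec) :
    (∀ L : Submodule K (τ → K), Module.finrank K L = 1 →
        ∑ i with (B.map (algebraMap R K)).row i ∈ L, (B.map (algebraMap R K)).row i = 0) ↔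
      ∀ i, IsParallelFaceComplement (A.map (algebraMap R K))
        {j | Coparallel (A.map (algebraMap R K)) i j} :=
  forall_line_sum_row_eq_zero_iff_isParallelFaceComplement (exact_mulVec_map_algebraMap K hAB)

end FractionField

/-- for a non pyramidal regular configuration with Gale dual `B`, the line-sum
criterion on the Gale rows (Theorem teo:Bside) holds iff every coparallelism class of `A`
is a parallel face complement (Theorem teo:Aside). -/
theorem stmt6 (d n : ℕ) (hd : 0 < d) (A : Matrix (Fin d) (Fin n) ℤ)
    (hreg : ∀ i : Fin n, A ⟨0, hd⟩ i = 1)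
    (hrank : (A.map (Int.cast : ℤ → ℚ)).rank = d)
    (hnp : ¬ ∃ (i₀ : Fin n) (l : Fin d → ℚ),
        (∀ i : Fin n, i ≠ i₀ → ∑ r, l r * (A r i : ℚ) = 0) ∧
        ∑ r, l r * (A r i₀ : ℚ) = 1)
    (B : Matrix (Fin n) (Fin (n - d)) ℤ)
    (hBind : ∀ c : Fin (n - d) → ℤ, B.mulVec c = 0 → c = 0)
    (hBspan : ∀ v : Fin n → ℤ, A.mulVec v = 0 ↔ ∃ c : Fin (n - d) → ℤ, v = B.mulVec c) :
    (∀ L : Submodule ℚ (Fin (n - d) → ℚ), Module.finrank ℚ L = 1 →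
        ∑ i ∈ Finset.univ.filter (fun i : Fin n => (fun t => (B i t : ℚ)) ∈ L),
          (fun t => (B i t : ℚ)) = (0 : Fin (n - d) → ℚ)) ↔
      ∀ i : Fin n, ∃ l : Fin d → ℚ,
        (∀ j : Fin n,
          (∀ v : Fin n → ℚ, (A.map (Int.cast : ℤ → ℚ)).mulVec v = 0 → (v i ≠ 0 ↔ v j ≠ 0)) →
            ∑ r, l r * (A r j : ℚ) = 1) ∧
        (∀ j : Fin n,
          ¬ (∀ v : Fin n → ℚ, (A.map (Int.cast : ℤ → ℚ)).mulVec v = 0 → (v i ≠ 0 ↔ v j ≠ 0)) →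
            ∑ r, l r * (A r j : ℚ) = 0) := by
  exact stmt6_general ℚ A B fun v ↦ (hBspan v).trans (exists_congr fun _ ↦ eq_comm)
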